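/- Let n ≥ 1, δ > 0, and let V : ℝⁿ → ℝ be a smooth potential of symbolic decay order −δ: for every multi-index α there is a constant C_α such that |∂^α V(x)| ≤ C_α (1+|x|)^{−δ−|α|} for all x ∈ ℝⁿ. Let λ > 0 and let ψ : ℝⁿ → ℂ be smooth with ∫_{ℝⁿ} |ψ|² < ∞ and −Δψ + Vψ = λψ on ℝⁿ, where Δ = Σᵢ ∂²/∂xᵢ². Then ψ ≡ 0. -/

import Mathlib

open MeasureTheory

/-- Euclidean Laplacian of a complex-valued function on `ℝⁿ`. -/
noncomputable def lap {n : ℕ} (f : EuclideanSpace ℝ (Fin n) → ℂ)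
    (x : EuclideanSpace ℝ (Fin n)) : ℂ :=
  ∑ i : Fin n, fderiv ℝ (fun y => fderiv ℝ f y (EuclideanSpace.single i 1)) x
    (EuclideanSpace.single i 1)

/-!
A positive-energy virial argument with Carleman weights. If `Δ v = W * v` and `a = exp (2φ)` is a
radial weight, a suitable vector field quadratic in `(v, ∇v)` has divergence
`(a square) + a * v ^ 2 * (gain φ - W - x·∇W / 2)`. Since `v` and `∇v` are square integrable and `a`
is bounded, the field grows too slowly to carry flux to infinity, so the integral of the last term
is at most `0`.

For `W = V - λ` the function `-W - x·∇W / 2` is bounded below by a positive constant near infinity.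
The weight `a = ((M + ‖x‖ ^ 2) / (N + ‖x‖ ^ 2)) ^ k`, with `N` of order `k ^ 2`, has a gain of order
`k ^ 2` on `ε ≤ ‖x‖ ≤ √M` and an arbitrarily small loss elsewhere, so the bracket is positive
outside the ball of radius `ε`. Inside that ball the weight is smaller than outside the ball of
radius `2ε` by a factor exponentially large in `k`, and `k → ∞` forces `v` to vanish outside every
ball around the origin.
-/

open Filter Topology
open scoped Gradient InnerProductSpace Laplacian

/-! ### Divergence and gradient -/

section Divergence

variable {E : Type*} [NormedAddCommGroup E]

section NormedSpace

variable [NormedSpace ℝ E] {f : E → ℝ} {F G : E → E} {x : E}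

/-- The divergence of a vector field, encoded without coordinates as the trace of its derivative. -/
noncomputable def divergence (F : E → E) (x : E) : ℝ :=
  LinearMap.trace ℝ E (fderiv ℝ F x)

lemma divergence_add (hF : DifferentiableAt ℝ F x) (hG : DifferentiableAt ℝ G x) :
    divergence (fun y => F y + G y) x = divergence F x + divergence G x := by
  simp [divergence, fderiv_fun_add hF hG]

variable [FiniteDimensional ℝ E]

lemma divergence_id : divergence (fun y : E => y) x = Module.finrank ℝ E := by
  simp [divergence]

lemma divergence_smul (hf : DifferentiableAt ℝ f x) (hF : DifferentiableAt ℝ F x) :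
    divergence (fun y => f y • F y) x = f x * divergence F x + fderiv ℝ f x (F x) := by
  simp [divergence, fderiv_fun_smul hf hF]

lemma continuous_divergence (hF : ContDiff ℝ 1 F) : Continuous (divergence F) := by
  have trace_continuous :
      Continuous ((LinearMap.trace ℝ E).comp (ContinuousLinearMap.coeLM ℝ)) :=
    LinearMap.continuous_of_finiteDimensional _
  exact trace_continuous.comp (hF.continuous_fderiv one_ne_zero)

end NormedSpace

variable [InnerProductSpace ℝ E] {f : E → ℝ} {F : E → E} {x y z : E}

lemma divergence_eq_sum_inner {ι : Type*} [Fintype ι] (b : OrthonormalBasis ι ℝ E) :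
    divergence F x = ∑ i, ⟪b i, fderiv ℝ F x (b i)⟫_ℝ :=
  LinearMap.trace_eq_sum_inner _ b

section Gradient

variable [CompleteSpace E]

lemma contDiff_gradient {m n : WithTop ℕ∞} (hf : ContDiff ℝ n f) (hmn : m + 1 ≤ n) :
    ContDiff ℝ m (∇ f) :=
  (InnerProductSpace.toDual ℝ E).symm.contDiff.comp (hf.fderiv_right hmn)

lemma norm_gradient : ‖∇ f x‖ = ‖fderiv ℝ f x‖ :=
  (InnerProductSpace.toDual ℝ E).symm.norm_map _

lemma fderiv_apply_gradient_self : fderiv ℝ f x (∇ f x) = ‖∇ f x‖ ^ 2 := by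
  rw [← inner_gradient_left, real_inner_self_eq_norm_sq]

lemma inner_fderiv_gradient (hf : ContDiff ℝ 2 f) :
    ⟪z, fderiv ℝ (∇ f) x y⟫_ℝ = fderiv ℝ (fderiv ℝ f) x y z := by
  have gradient_differentiable : DifferentiableAt ℝ (∇ f) x :=
    (contDiff_gradient hf le_rfl).differentiable one_ne_zero x
  have fderiv_differentiable : DifferentiableAt ℝ (fderiv ℝ f) x :=
    (hf.fderiv_right le_rfl).differentiable one_ne_zero x
  calc ⟪z, fderiv ℝ (∇ f) x y⟫_ℝ = fderiv ℝ (fun w => ⟪z, ∇ f w⟫_ℝ) x y := by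
        rw [fderiv_inner_apply ℝ (differentiableAt_const z) gradient_differentiable]
        simp
    _ = fderiv ℝ (fun w => fderiv ℝ f w z) x y := by simp
    _ = fderiv ℝ (fderiv ℝ f) x y z := by
        simp [fderiv_clm_apply fderiv_differentiable (differentiableAt_const z)]

end Gradient

variable [FiniteDimensional ℝ E]

lemma divergence_gradient (hf : ContDiff ℝ 2 f) : divergence (∇ f) x = Δ f x := by
  rw [divergence_eq_sum_inner (stdOrthonormalBasis ℝ E),
    InnerProductSpace.laplacian_eq_iteratedFDeriv_stdOrthonormalBasis]
  simp [iteratedFDeriv_two_apply, inner_fderiv_gradient hf]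

variable [MeasurableSpace E] [BorelSpace E] {μ : Measure E} [μ.IsAddHaarMeasure]

lemma integrable_divergence (hF : ContDiff ℝ 1 F) (hFc : HasCompactSupport F) :
    Integrable (divergence F) μ :=
  (continuous_divergence hF).integrable_of_hasCompactSupport <|
    (hFc.fderiv ℝ).comp_left (g := fun L : E →L[ℝ] E => LinearMap.trace ℝ E L) (by simp)

lemma integral_fderiv_eq_zero {u : E → ℝ} (hu : ContDiff ℝ 1 u) (huc : HasCompactSupport u)
    (e : E) : ∫ x, fderiv ℝ u x e ∂μ = 0 := by
  have hu' : Integrable (fun x => fderiv ℝ u x e) μ :=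
    ((hu.continuous_fderiv one_ne_zero).clm_apply continuous_const).integrable_of_hasCompactSupport
      (huc.fderiv_apply (𝕜 := ℝ) e)
  simpa using integral_mul_fderiv_eq_neg_fderiv_mul_of_integrable (μ := μ) (v := e)
    (f := fun _ : E => (1 : ℝ)) (g := u) (by simp) (by simpa using hu')
    (by simpa using hu.continuous.integrable_of_hasCompactSupport huc)
    (by simp) (fun x _ => hu.differentiable one_ne_zero x)

lemma integral_divergence_eq_zero (hF : ContDiff ℝ 1 F) (hFc : HasCompactSupport F) :
    ∫ x, divergence F x ∂μ = 0 := by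
  let b := stdOrthonormalBasis ℝ E
  have component_contDiff (i) : ContDiff ℝ 1 (fun x => ⟪b i, F x⟫_ℝ) := contDiff_const.inner ℝ hF
  have component_hasCompactSupport (i) : HasCompactSupport (fun x => ⟪b i, F x⟫_ℝ) :=
    hFc.comp_left (g := fun y => ⟪b i, y⟫_ℝ) (by simp)
  have divergence_eq (x) : divergence F x = ∑ i, fderiv ℝ (fun y => ⟪b i, F y⟫_ℝ) x (b i) := by
    rw [divergence_eq_sum_inner b]
    refine Finset.sum_congr rfl fun i _ => ?_
    rw [fderiv_inner_apply ℝ (differentiableAt_const _) (hF.differentiable one_ne_zero x)]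
    simp
  simp_rw [divergence_eq]
  rw [integral_finsetSum]
  · exact Finset.sum_eq_zero fun i _ =>
      integral_fderiv_eq_zero (component_contDiff i) (component_hasCompactSupport i) _
  · exact fun i _ => (((component_contDiff i).continuous_fderiv one_ne_zero).clm_apply
      continuous_const).integrable_of_hasCompactSupport
        ((component_hasCompactSupport i).fderiv_apply (𝕜 := ℝ) _)

end Divergence

/-! ### Cutoffs and integration of divergences -/

section Cutoff

variable {E : Type*} [NormedAddCommGroup E] [InnerProductSpace ℝ E] {R : ℝ} {x : E}

/-- The bump function equal to `1` on the unit ball and supported in the ball of radius `2`. -/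
noncomputable def unitBump (E : Type*) [NormedAddCommGroup E] : ContDiffBump (0 : E) :=
  ⟨1, 2, one_pos, one_lt_two⟩

/-- A smooth cutoff equal to `1` on the ball of radius `R` and supported in the ball of radius
`2 * R`, obtained by rescaling one fixed bump function. -/
noncomputable def cutoff (R : ℝ) (x : E) : ℝ := unitBump E (R⁻¹ • x)

lemma cutoff_nonneg : 0 ≤ cutoff R x := (unitBump E).nonneg

lemma cutoff_le_one : cutoff R x ≤ 1 := (unitBump E).le_one

lemma norm_inv_smul (hR : 0 < R) : ‖R⁻¹ • x‖ = ‖x‖ / R := by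
  rw [norm_smul, norm_inv, Real.norm_of_nonneg hR.le, inv_mul_eq_div]

lemma cutoff_eq_one (hR : 0 < R) (hx : ‖x‖ ≤ R) : cutoff R x = 1 :=
  (unitBump E).one_of_mem_closedBall <| by
    rw [mem_closedBall_zero_iff, norm_inv_smul hR]
    exact (div_le_one hR).2 hx

lemma fderiv_cutoff_eq_zero (hR : 0 < R) (hx : ‖x‖ ≤ R) : fderiv ℝ (cutoff R) x = 0 :=
  IsLocalMax.fderiv_eq_zero <| Eventually.of_forall fun _ =>
    cutoff_le_one.trans_eq (cutoff_eq_one hR hx).symm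

lemma tendsto_cutoff_mul_add_fderiv_cutoff (s : ℝ) (w : E) :
    Tendsto (fun R => cutoff R x * s + fderiv ℝ (cutoff R) x w) atTop (𝓝 s) := by
  refine tendsto_const_nhds.congr' ?_
  filter_upwards [eventually_ge_atTop ‖x‖, eventually_gt_atTop 0] with R hR R_pos
  simp [cutoff_eq_one R_pos hR, fderiv_cutoff_eq_zero R_pos hR]

lemma norm_cutoff_mul_add_fderiv_cutoff_le {C h s : ℝ} {w : E}
    (hC : ‖fderiv ℝ (cutoff R) x‖ * (1 + ‖x‖) ≤ C) (hw : ‖w‖ ≤ (1 + ‖x‖) * h) :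
    ‖cutoff R x * s + fderiv ℝ (cutoff R) x w‖ ≤ ‖s‖ + C * h := by
  have h_nonneg : 0 ≤ h := nonneg_of_mul_nonneg_right ((norm_nonneg _).trans hw) (by positivity)
  calc ‖cutoff R x * s + fderiv ℝ (cutoff R) x w‖
      ≤ ‖cutoff R x * s‖ + ‖fderiv ℝ (cutoff R) x w‖ := norm_add_le _ _
    _ ≤ 1 * ‖s‖ + ‖fderiv ℝ (cutoff R) x‖ * ((1 + ‖x‖) * h) := by
      rw [norm_mul, Real.norm_of_nonneg cutoff_nonneg]
      gcongr
      · exact cutoff_le_one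
      · exact ContinuousLinearMap.le_opNorm_of_le _ hw
    _ ≤ ‖s‖ + C * h := by
      rw [one_mul, ← mul_assoc]
      gcongr

variable [FiniteDimensional ℝ E]

lemma contDiff_cutoff {n : ℕ∞} : ContDiff ℝ n (cutoff R : E → ℝ) :=
  (unitBump E).contDiff.comp (contDiff_const_smul _)

lemma hasCompactSupport_cutoff (hR : 0 < R) : HasCompactSupport (cutoff R : E → ℝ) :=
  (unitBump E).hasCompactSupport.comp_homeomorph (Homeomorph.smulOfNeZero R⁻¹ (by positivity))

lemma fderiv_cutoff_eq_zero_of_lt (hR : 0 < R) (hx : 2 * R < ‖x‖) :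
    fderiv ℝ (cutoff R) x = 0 := by
  have cutoff_x : cutoff R x = 0 := (unitBump E).zero_of_le_dist <| by
    rw [dist_zero_right, norm_inv_smul hR]
    exact (le_div_iff₀ hR).2 hx.le
  exact IsLocalMin.fderiv_eq_zero <| Eventually.of_forall fun _ =>
    cutoff_x.trans_le cutoff_nonneg

lemma exists_norm_fderiv_cutoff_mul_le :
    ∃ C, ∀ R, 1 ≤ R → ∀ x : E, ‖fderiv ℝ (cutoff R) x‖ * (1 + ‖x‖) ≤ C := by
  obtain ⟨C, hC⟩ := (((unitBump E).contDiff (n := 1)).continuous_fderiv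
    one_ne_zero).bounded_above_of_compact_support ((unitBump E).hasCompactSupport.fderiv ℝ)
  have C_nonneg : 0 ≤ C := (norm_nonneg _).trans (hC 0)
  refine ⟨3 * C, fun R hR x => ?_⟩
  have R_pos : 0 < R := by linarith
  rcases lt_or_ge (2 * R) ‖x‖ with hx | hx
  · simpa [fderiv_cutoff_eq_zero_of_lt R_pos hx] using C_nonneg
  calc ‖fderiv ℝ (cutoff R) x‖ * (1 + ‖x‖)
      = R⁻¹ * ‖fderiv ℝ (unitBump E) (R⁻¹ • x)‖ * (1 + ‖x‖) := by
        have fderiv_cutoff : fderiv ℝ (cutoff R) x = R⁻¹ • fderiv ℝ (unitBump E) (R⁻¹ • x) :=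
          fderiv_comp_smul ..
        rw [fderiv_cutoff, norm_smul, norm_inv, Real.norm_of_nonneg R_pos.le]
    _ ≤ R⁻¹ * C * (3 * R) := by
        gcongr
        · exact hC _
        · linarith
    _ = 3 * C := by field_simp

end Cutoff

section Integration

variable {E : Type*} [NormedAddCommGroup E] [InnerProductSpace ℝ E] [FiniteDimensional ℝ E]
  {v W χ : E → ℝ} {B C : ℝ} {x : E}

lemma divergence_sq_mul_smul_gradient (hχ : ContDiff ℝ 1 χ)
    (hv : ContDiff ℝ 2 v) :
    divergence (fun y => (χ y ^ 2 * v y) • ∇ v y) x =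
      χ x ^ 2 * v x * Δ v x + χ x ^ 2 * ‖∇ v x‖ ^ 2 +
        2 * χ x * v x * fderiv ℝ χ x (∇ v x) := by
  have hχ' := (hχ.differentiable one_ne_zero x).hasFDerivAt
  have hv' := (hv.differentiable two_ne_zero x).hasFDerivAt
  have hprod := (hχ'.pow 2).fun_mul hv'
  rw [divergence_smul hprod.differentiableAt
    ((contDiff_gradient hv le_rfl).differentiable one_ne_zero x), divergence_gradient hv,
    hprod.fderiv]
  simp only [Nat.add_one_sub_one, pow_one, nsmul_eq_mul, Nat.cast_ofNat, add_apply, smul_apply,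
    fderiv_apply_gradient_self, smul_eq_mul]
  ring

lemma le_divergence_sq_mul_smul_gradient (hχ : ContDiff ℝ 1 χ)
    (hv : ContDiff ℝ 2 v) (fderiv_χ_le : ‖fderiv ℝ χ x‖ ≤ C) (χ_le_one : |χ x| ≤ 1)
    (hW : |W x| ≤ B) (heq : Δ v x = W x * v x) :
    χ x ^ 2 * ‖∇ v x‖ ^ 2 / 2 - (B + 2 * C ^ 2) * v x ^ 2 ≤
      divergence (fun y => (χ y ^ 2 * v y) • ∇ v y) x := by
  rw [divergence_sq_mul_smul_gradient hχ hv, heq]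
  have cross_le : |fderiv ℝ χ x (∇ v x)| ≤ C * ‖∇ v x‖ :=
    ((fderiv ℝ χ x).le_opNorm _).trans (by gcongr)
  have potential_ge : -(B * v x ^ 2) ≤ χ x ^ 2 * v x * (W x * v x) := by
    have : |χ x ^ 2 * W x| ≤ B := by
      rw [abs_mul, abs_pow]
      exact (mul_le_of_le_one_left (abs_nonneg _) (pow_le_one₀ (abs_nonneg _) χ_le_one)).trans hW
    nlinarith [mul_le_mul_of_nonneg_right (neg_le_of_abs_le this) (sq_nonneg (v x))]
  have cross_ge : -(χ x ^ 2 * ‖∇ v x‖ ^ 2 / 2 + 2 * C ^ 2 * v x ^ 2) ≤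
      2 * χ x * v x * fderiv ℝ χ x (∇ v x) := by
    refine neg_le_of_abs_le ?_
    calc |2 * χ x * v x * fderiv ℝ χ x (∇ v x)|
        = 2 * |χ x| * |v x| * |fderiv ℝ χ x (∇ v x)| := by simp [abs_mul]
      _ ≤ 2 * |χ x| * |v x| * (C * ‖∇ v x‖) := by gcongr
      _ ≤ |χ x| ^ 2 * ‖∇ v x‖ ^ 2 / 2 + 2 * C ^ 2 * |v x| ^ 2 := by
        linarith [sq_nonneg (|χ x| * ‖∇ v x‖ - 2 * C * |v x|)]
      _ = χ x ^ 2 * ‖∇ v x‖ ^ 2 / 2 + 2 * C ^ 2 * v x ^ 2 := by simp only [sq_abs]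
  linarith

variable [MeasurableSpace E] [BorelSpace E] {μ : Measure E} [μ.IsAddHaarMeasure]

lemma integral_nonpos_of_le_divergence {F : E → E} {h k : E → ℝ} (hF : ContDiff ℝ 1 F)
    (hh : Integrable h μ) (hk : Integrable k μ) (F_le : ∀ x, ‖F x‖ ≤ (1 + ‖x‖) * h x)
    (k_le : ∀ x, k x ≤ divergence F x) : ∫ x, k x ∂μ ≤ 0 := by
  obtain ⟨C, hC⟩ := exists_norm_fderiv_cutoff_mul_le (E := E)
  let localized (R : ℝ) (x : E) : ℝ := cutoff R x * k x + fderiv ℝ (cutoff R) x (F x)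
  have localized_measurable (R) : AEStronglyMeasurable (localized R) μ :=
    (contDiff_cutoff (n := 0).continuous.aestronglyMeasurable.mul hk.aestronglyMeasurable).add
      (((contDiff_cutoff (n := 1)).continuous_fderiv one_ne_zero).clm_apply
        hF.continuous).aestronglyMeasurable
  have norm_localized_le (R) (hR : 1 ≤ R) (x) : ‖localized R x‖ ≤ ‖k x‖ + C * h x :=
    norm_cutoff_mul_add_fderiv_cutoff_le (hC R hR x) (F_le x)
  have bound_integrable : Integrable (fun x => ‖k x‖ + C * h x) μ := hk.norm.add (hh.const_mul C)
  have integral_localized_nonpos (R) (hR : 1 ≤ R) : ∫ x, localized R x ∂μ ≤ 0 := by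
    have smul_contDiff : ContDiff ℝ 1 (fun x => cutoff R x • F x) := contDiff_cutoff.smul hF
    have smul_hasCompactSupport : HasCompactSupport (fun x => cutoff R x • F x) :=
      (hasCompactSupport_cutoff (by positivity)).smul_right
    rw [← integral_divergence_eq_zero (μ := μ) smul_contDiff smul_hasCompactSupport]
    refine integral_mono (bound_integrable.mono' (localized_measurable R)
      (.of_forall (norm_localized_le R hR)))
      (integrable_divergence smul_contDiff smul_hasCompactSupport) fun x => ?_
    rw [divergence_smul (contDiff_cutoff.differentiable one_ne_zero x)
      (hF.differentiable one_ne_zero x)]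
    exact add_le_add_left (mul_le_mul_of_nonneg_left (k_le x) cutoff_nonneg) _
  have integral_localized_tendsto :
      Tendsto (fun R => ∫ x, localized R x ∂μ) atTop (𝓝 (∫ x, k x ∂μ)) :=
    tendsto_integral_filter_of_dominated_convergence _ (.of_forall localized_measurable)
      (eventually_ge_atTop 1 |>.mono fun R hR => .of_forall (norm_localized_le R hR))
      bound_integrable (.of_forall fun x => tendsto_cutoff_mul_add_fderiv_cutoff _ _)
  exact le_of_tendsto integral_localized_tendsto
    ((eventually_ge_atTop 1).mono integral_localized_nonpos)

lemma setIntegral_closedBall_norm_gradient_sq_le {R : ℝ} (hR : 0 < R) (hv : ContDiff ℝ 2 v)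
    (hv2 : Integrable (fun x => v x ^ 2) μ) (hC : ∀ x : E, ‖fderiv ℝ (cutoff R) x‖ ≤ C)
    (hW : ∀ x, |W x| ≤ B) (heq : ∀ x, Δ v x = W x * v x) :
    ∫ x in Metric.closedBall 0 R, ‖∇ v x‖ ^ 2 ∂μ ≤ 2 * (B + 2 * C ^ 2) * ∫ x, v x ^ 2 ∂μ := by
  have cutoff_contDiff : ContDiff ℝ 1 (cutoff R : E → ℝ) := contDiff_cutoff
  have cutoff_hasCompactSupport := hasCompactSupport_cutoff (E := E) hR
  have gradient_contDiff : ContDiff ℝ 1 (∇ v) := contDiff_gradient hv le_rfl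
  have field_contDiff : ContDiff ℝ 1 (fun y => (cutoff R y ^ 2 * v y) • ∇ v y) :=
    ((cutoff_contDiff.pow 2).mul (hv.of_le one_le_two)).smul gradient_contDiff
  have field_hasCompactSupport :
      HasCompactSupport (fun y => (cutoff R y ^ 2 * v y) • ∇ v y) :=
    cutoff_hasCompactSupport.mono' fun y hy => subset_closure fun h => hy (by simp [h])
  have energy_integrable : Integrable (fun x => cutoff R x ^ 2 * ‖∇ v x‖ ^ 2) μ :=
    ((cutoff_contDiff.continuous.pow 2).mul
      (gradient_contDiff.continuous.norm.pow 2)).integrable_of_hasCompactSupport <|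
      cutoff_hasCompactSupport.mono' fun y hy => subset_closure fun h => hy (by simp [h])
  have localized_energy_le : (∫ x, cutoff R x ^ 2 * ‖∇ v x‖ ^ 2 ∂μ) / 2 -
      (B + 2 * C ^ 2) * ∫ x, v x ^ 2 ∂μ ≤ 0 := by
    rw [← integral_divergence_eq_zero (μ := μ) field_contDiff field_hasCompactSupport,
      ← integral_div, ← integral_const_mul, ← integral_sub (energy_integrable.div_const 2)
        (hv2.const_mul _)]
    refine integral_mono ((energy_integrable.div_const 2).sub (hv2.const_mul _))
      (integrable_divergence field_contDiff field_hasCompactSupport) fun x => ?_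
    exact le_divergence_sq_mul_smul_gradient cutoff_contDiff hv (hC x)
      (abs_le.2 ⟨by linarith [cutoff_nonneg (R := R) (x := x)], cutoff_le_one⟩) (hW x) (heq x)
  calc ∫ x in Metric.closedBall 0 R, ‖∇ v x‖ ^ 2 ∂μ
      = ∫ x in Metric.closedBall 0 R, cutoff R x ^ 2 * ‖∇ v x‖ ^ 2 ∂μ :=
        setIntegral_congr_fun Metric.isClosed_closedBall.measurableSet fun x hx => by
          simp [cutoff_eq_one hR (mem_closedBall_zero_iff.1 hx)]
    _ ≤ ∫ x, cutoff R x ^ 2 * ‖∇ v x‖ ^ 2 ∂μ :=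
        setIntegral_le_integral energy_integrable (.of_forall fun x => by positivity)
    _ ≤ 2 * (B + 2 * C ^ 2) * ∫ x, v x ^ 2 ∂μ := by linarith

lemma integrable_norm_gradient_sq (hv : ContDiff ℝ 2 v) (hv2 : Integrable (fun x => v x ^ 2) μ)
    (hW : ∀ x, |W x| ≤ B) (heq : ∀ x, Δ v x = W x * v x) :
    Integrable (fun x => ‖∇ v x‖ ^ 2) μ := by
  obtain ⟨C, hC⟩ := exists_norm_fderiv_cutoff_mul_le (E := E)
  have norm_fderiv_cutoff_le (R) (hR : 1 ≤ R) (x : E) : ‖fderiv ℝ (cutoff R) x‖ ≤ C :=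
    (le_mul_of_one_le_right (norm_nonneg _) (by simp)).trans (hC R hR x)
  have energy_continuous : Continuous (fun x => ‖∇ v x‖ ^ 2) :=
    (contDiff_gradient (m := 1) hv le_rfl).continuous.norm.pow 2
  refine (aecover_closedBall (x := (0 : E)) tendsto_id).integrable_of_integral_bounded_of_nonneg_ae
    (2 * (B + 2 * C ^ 2) * ∫ x, v x ^ 2 ∂μ)
    (fun R => energy_continuous.continuousOn.integrableOn_compact (isCompact_closedBall 0 R))
    (.of_forall fun x => by positivity) ?_
  filter_upwards [eventually_ge_atTop 1] with R hR
  exact setIntegral_closedBall_norm_gradient_sq_le (by positivity) hv hv2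
    (norm_fderiv_cutoff_le R hR) hW heq

end Integration

/-! ### The virial field of a radial weight -/

section RadialWeight

variable {E : Type*} [NormedAddCommGroup E] [InnerProductSpace ℝ E]

/-- `f` is differentiable with gradient `k x • x` at every point `x`: for a radial function
`f x = F (‖x‖ ^ 2)` this says `k x = 2 * F' (‖x‖ ^ 2)`. -/
def HasRadialDeriv (f k : E → ℝ) : Prop :=
  ∀ x, HasFDerivAt f (k x • innerSL ℝ x) x

namespace HasRadialDeriv

variable {f g k l : E → ℝ}

lemma congr_deriv (hf : HasRadialDeriv f k) (h : ∀ x, k x = l x) : HasRadialDeriv f l :=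
  funext h ▸ hf

lemma contDiff (hf : HasRadialDeriv f k) (hk : Continuous k) : ContDiff ℝ 1 f :=
  contDiff_one_iff_hasFDerivAt.2 ⟨_, hk.smul (innerSL ℝ).continuous, hf⟩

lemma const_add (c : ℝ) (hf : HasRadialDeriv f k) : HasRadialDeriv (fun x => c + f x) k :=
  fun x => (hf x).const_add c

lemma norm_sq : HasRadialDeriv (fun x : E => ‖x‖ ^ 2) (fun _ => 2) := fun x => by
  simpa [two_smul] using (hasStrictFDerivAt_norm_sq x).hasFDerivAt

lemma const_mul (c : ℝ) (hf : HasRadialDeriv f k) :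
    HasRadialDeriv (fun x => c * f x) (fun x => c * k x) := fun x => by
  simpa [smul_smul] using (hf x).const_mul c

lemma add (hf : HasRadialDeriv f k) (hg : HasRadialDeriv g l) :
    HasRadialDeriv (fun x => f x + g x) (fun x => k x + l x) := fun x => by
  simpa [add_smul] using (hf x).fun_add (hg x)

lemma sub (hf : HasRadialDeriv f k) (hg : HasRadialDeriv g l) :
    HasRadialDeriv (fun x => f x - g x) (fun x => k x - l x) := fun x => by
  simpa [sub_smul] using (hf x).fun_sub (hg x)

lemma pow (hf : HasRadialDeriv f k) (n : ℕ) :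
    HasRadialDeriv (fun x => f x ^ n) (fun x => n * f x ^ (n - 1) * k x) := fun x => by
  simpa [smul_smul] using (hf x).pow n

lemma mul (hf : HasRadialDeriv f k) (hg : HasRadialDeriv g l) :
    HasRadialDeriv (fun x => f x * g x) (fun x => f x * l x + g x * k x) := fun x => by
  simpa [add_smul, mul_smul] using (hf x).fun_mul (hg x)

lemma inv (hf : HasRadialDeriv f k) (hf₀ : ∀ x, f x ≠ 0) :
    HasRadialDeriv (fun x => (f x)⁻¹) (fun x => -k x * (f x)⁻¹ ^ 2) := fun x => by
  simpa [smul_smul, Function.comp_def, mul_comm] using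
    (hasDerivAt_inv (hf₀ x)).comp_hasFDerivAt x (hf x)

end HasRadialDeriv

variable (E) in
/-- A bounded radial Carleman weight `a = exp (2φ)`, recorded through the functions `g, g₁, g₂`
with `∇φ = g • x`, `∇g = g₁ • x` and `∇g₁ = g₂ • x`. -/
structure RadialWeight where
  /-- The weight `exp (2φ)`. -/
  a : E → ℝ
  /-- The radial derivative of `φ`. -/
  g : E → ℝ
  /-- The radial derivative of `g`. -/
  g₁ : E → ℝ
  /-- The radial derivative of `g₁`. -/
  g₂ : E → ℝ
  /-- A common bound for the quantities controlled below. -/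
  D : ℝ
  hasRadialDeriv_a : HasRadialDeriv a (fun x => 2 * g x * a x)
  hasRadialDeriv_g : HasRadialDeriv g g₁
  hasRadialDeriv_g₁ : HasRadialDeriv g₁ g₂
  continuous_g₂ : Continuous g₂
  a_nonneg : ∀ x, 0 ≤ a x
  a_le_one : ∀ x, a x ≤ 1
  g_nonneg : ∀ x, 0 ≤ g x
  g_le : ∀ x, g x ≤ D
  norm_sq_mul_g_le : ∀ x, ‖x‖ ^ 2 * g x ≤ D
  norm_sq_mul_abs_g₁_le : ∀ x, ‖x‖ ^ 2 * |g₁ x| ≤ D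

/-- The potential `W + x·∇W/2` of the virial theorem: `H = -Δ + W` satisfies
`[H, x·∇] = 2 (H - virialPotential W)`. -/
noncomputable def virialPotential (W : E → ℝ) (x : E) : ℝ := W x + fderiv ℝ W x x / 2

lemma continuous_virialPotential {W : E → ℝ} (hW : ContDiff ℝ 1 W) :
    Continuous (virialPotential W) :=
  hW.continuous.add
    (((hW.continuous_fderiv one_ne_zero).clm_apply continuous_id).div_const 2)

lemma mul_add_mul_le_one_add_mul {b c r s t : ℝ} (hb : 0 ≤ b) (hc : 0 ≤ c) (hr : 0 ≤ r) :
    (s * r + b * t) * s + (c * t ^ 2 + s ^ 2 / 2) * r ≤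
      (1 + r) * ((2 + b + c) * (s ^ 2 + t ^ 2)) := by
  have cross_le : t * s ≤ s ^ 2 + t ^ 2 := by nlinarith [sq_nonneg (s - t)]
  have remainder_nonneg : 0 ≤ 2 * (s ^ 2 + t ^ 2) + r * s ^ 2 / 2 + 2 * r * t ^ 2 +
      b * r * (s ^ 2 + t ^ 2) + c * (s ^ 2 + t ^ 2) + c * r * s ^ 2 := by positivity
  linarith [mul_le_mul_of_nonneg_left cross_le hb]

namespace RadialWeight

variable (w : RadialWeight E) {v W : E → ℝ} {B : ℝ} {x : E}

lemma contDiff_g₁ : ContDiff ℝ 1 w.g₁ := w.hasRadialDeriv_g₁.contDiff w.continuous_g₂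

lemma contDiff_g : ContDiff ℝ 1 w.g := w.hasRadialDeriv_g.contDiff w.contDiff_g₁.continuous

lemma continuous_a : Continuous w.a := continuous_iff_continuousAt.2 fun x =>
  (w.hasRadialDeriv_a x).continuousAt

lemma contDiff_a : ContDiff ℝ 1 w.a :=
  w.hasRadialDeriv_a.contDiff <|
    (continuous_const.mul w.contDiff_g.continuous).mul w.continuous_a

/-- The pointwise gain `|∇φ|² + x·∇|∇φ|²/2 - (x·∇)²g/2` of the conjugated virial identity. -/
noncomputable def gain (x : E) : ℝ :=
  2 * ‖x‖ ^ 2 * w.g x ^ 2 + ‖x‖ ^ 4 * w.g x * w.g₁ x - ‖x‖ ^ 2 * w.g₁ x - ‖x‖ ^ 4 * w.g₂ x / 2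

/-- The coefficient of `v` in the `∇v`-component of the virial field. -/
noncomputable def linearCoeff (x : E) : ℝ :=
  w.a x * ((Module.finrank ℝ E / 2 - 1 : ℝ) + ‖x‖ ^ 2 * w.g x)

/-- The part of the coefficient of `v²` in the virial field that does not involve the potential. -/
noncomputable def quadraticCoeff (x : E) : ℝ :=
  w.a x * (Module.finrank ℝ E / 2 * w.g x + ‖x‖ ^ 2 * (w.g x ^ 2 - 1 / 2 * w.g₁ x))

lemma hasRadialDeriv_linearCoeff :
    HasRadialDeriv w.linearCoeff fun x =>
      w.a x * (Module.finrank ℝ E * w.g x + 2 * ‖x‖ ^ 2 * w.g x ^ 2 + ‖x‖ ^ 2 * w.g₁ x) :=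
  (w.hasRadialDeriv_a.mul
    ((HasRadialDeriv.norm_sq.mul w.hasRadialDeriv_g).const_add _)).congr_deriv fun x => by ring

lemma hasRadialDeriv_quadraticCoeff :
    HasRadialDeriv w.quadraticCoeff fun x =>
      2 * w.g x * w.quadraticCoeff x + w.a x * (Module.finrank ℝ E / 2 * w.g₁ x +
        2 * w.g x ^ 2 + 2 * ‖x‖ ^ 2 * w.g x * w.g₁ x - w.g₁ x - ‖x‖ ^ 2 * w.g₂ x / 2) :=
  (w.hasRadialDeriv_a.mul ((w.hasRadialDeriv_g.const_mul _).add (HasRadialDeriv.norm_sq.mul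
    ((w.hasRadialDeriv_g.pow 2).sub (w.hasRadialDeriv_g₁.const_mul _))))).congr_deriv fun x => by
      simp only [quadraticCoeff, Nat.cast_ofNat, Nat.add_one_sub_one, pow_one]
      ring

lemma contDiff_linearCoeff : ContDiff ℝ 1 w.linearCoeff :=
  w.contDiff_a.mul (contDiff_const.add ((contDiff_norm_sq ℝ).mul w.contDiff_g))

lemma contDiff_quadraticCoeff : ContDiff ℝ 1 w.quadraticCoeff :=
  w.contDiff_a.mul ((contDiff_const.mul w.contDiff_g).add ((contDiff_norm_sq ℝ).mul
    ((w.contDiff_g.pow 2).sub (contDiff_const.mul w.contDiff_g₁))))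

lemma D_nonneg : 0 ≤ w.D := (w.g_nonneg 0).trans (w.g_le 0)

lemma abs_a_mul_le {s C : ℝ} (hs : |s| ≤ C) : |w.a x * s| ≤ C := by
  rw [abs_mul, abs_of_nonneg (w.a_nonneg x)]
  exact (mul_le_of_le_one_left (abs_nonneg s) (w.a_le_one x)).trans hs

lemma abs_linearCoeff_le : |w.linearCoeff x| ≤ Module.finrank ℝ E / 2 + 1 + w.D := by
  refine w.abs_a_mul_le (abs_le.2 ⟨?_, ?_⟩) <;>
    linarith [w.norm_sq_mul_g_le x, mul_nonneg (sq_nonneg ‖x‖) (w.g_nonneg x), w.D_nonneg,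
      (Nat.cast_nonneg _ : (0 : ℝ) ≤ Module.finrank ℝ E)]

lemma abs_quadraticCoeff_le :
    |w.quadraticCoeff x| ≤ Module.finrank ℝ E / 2 * w.D + w.D * w.D + w.D := by
  refine w.abs_a_mul_le ?_
  have g_term : |Module.finrank ℝ E / 2 * w.g x| ≤ Module.finrank ℝ E / 2 * w.D := by
    rw [abs_of_nonneg (mul_nonneg (by positivity) (w.g_nonneg x))]
    gcongr
    exact w.g_le x
  have g_sq_term : |‖x‖ ^ 2 * w.g x * w.g x| ≤ w.D * w.D := by
    rw [abs_of_nonneg (mul_nonneg (mul_nonneg (sq_nonneg _) (w.g_nonneg x)) (w.g_nonneg x))]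
    exact mul_le_mul (w.norm_sq_mul_g_le x) (w.g_le x) (w.g_nonneg x) w.D_nonneg
  have g₁_term : |‖x‖ ^ 2 * w.g₁ x| ≤ w.D := by
    rw [abs_mul, abs_of_nonneg (sq_nonneg ‖x‖)]
    exact w.norm_sq_mul_abs_g₁_le x
  rw [abs_le] at g_term g_sq_term g₁_term ⊢
  constructor <;> linarith [w.D_nonneg]

/-- The coefficient of `∇v` in the virial field. -/
noncomputable def gradientCoeff (v : E → ℝ) (x : E) : ℝ :=
  w.a x * fderiv ℝ v x x + w.linearCoeff x * v x

lemma contDiff_gradientCoeff (hv : ContDiff ℝ 2 v) : ContDiff ℝ 1 (w.gradientCoeff v) :=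
  (w.contDiff_a.mul ((hv.fderiv_right le_rfl).clm_apply contDiff_id)).add
    (w.contDiff_linearCoeff.mul (hv.of_le one_le_two))

lemma fderiv_gradientCoeff_apply (hv : ContDiff ℝ 2 v) (y : E) :
    fderiv ℝ (w.gradientCoeff v) x y =
      2 * w.g x * w.a x * ⟪x, y⟫_ℝ * fderiv ℝ v x x +
      w.a x * (fderiv ℝ (fderiv ℝ v) x y x + fderiv ℝ v x y) +
      w.a x * (Module.finrank ℝ E * w.g x + 2 * ‖x‖ ^ 2 * w.g x ^ 2 + ‖x‖ ^ 2 * w.g₁ x) *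
        ⟪x, y⟫_ℝ * v x +
      w.linearCoeff x * fderiv ℝ v x y := by
  have hv' := (hv.differentiable two_ne_zero x).hasFDerivAt
  have hv'' := ((hv.fderiv_right le_rfl).differentiable one_ne_zero x).hasFDerivAt
  have total := ((w.hasRadialDeriv_a x).fun_mul (hv''.clm_apply (hasFDerivAt_id x))).fun_add
    ((w.hasRadialDeriv_linearCoeff x).fun_mul hv')
  rw [show fderiv ℝ (w.gradientCoeff v) x = _ from HasFDerivAt.fderiv total]
  simp only [ContinuousLinearMap.comp_id, id_eq, smul_add, add_apply, smul_apply, smul_eq_mul,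
    ContinuousLinearMap.flip_apply, coe_innerSL_apply]
  ring

variable [FiniteDimensional ℝ E]

/-- The coefficient of the position vector in the virial field. -/
noncomputable def radialCoeff (v W : E → ℝ) (x : E) : ℝ :=
  (w.quadraticCoeff x - w.a x * W x / 2) * v x ^ 2 - w.a x * ‖∇ v x‖ ^ 2 / 2

/-- The vector field whose divergence is the virial (Rellich–Pohozaev) identity for solutions of
`Δ v = W * v`, conjugated by the weight `a`. -/
noncomputable def virialField (v W : E → ℝ) (x : E) : E :=
  w.gradientCoeff v x • ∇ v x + w.radialCoeff v W x • x

lemma contDiff_radialCoeff (hv : ContDiff ℝ 2 v) (hW : ContDiff ℝ 1 W) :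
    ContDiff ℝ 1 (w.radialCoeff v W) :=
  ((w.contDiff_quadraticCoeff.sub ((w.contDiff_a.mul hW).div_const 2)).mul
    ((hv.of_le one_le_two).pow 2)).sub
      ((w.contDiff_a.mul ((contDiff_gradient hv le_rfl).norm_sq ℝ)).div_const 2)

lemma contDiff_virialField (hv : ContDiff ℝ 2 v) (hW : ContDiff ℝ 1 W) :
    ContDiff ℝ 1 (w.virialField v W) :=
  ((w.contDiff_gradientCoeff hv).smul (contDiff_gradient hv le_rfl)).add
    ((w.contDiff_radialCoeff hv hW).smul contDiff_id)

lemma fderiv_radialCoeff_apply_self (hv : ContDiff ℝ 2 v) (hW : ContDiff ℝ 1 W) :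
    fderiv ℝ (w.radialCoeff v W) x x =
      ((2 * w.g x * w.quadraticCoeff x + w.a x * (Module.finrank ℝ E / 2 * w.g₁ x +
          2 * w.g x ^ 2 + 2 * ‖x‖ ^ 2 * w.g x * w.g₁ x - w.g₁ x - ‖x‖ ^ 2 * w.g₂ x / 2)) *
          ‖x‖ ^ 2 - (2 * w.g x * w.a x * ‖x‖ ^ 2 * W x + w.a x * fderiv ℝ W x x) / 2) *
        v x ^ 2 +
      2 * (w.quadraticCoeff x - w.a x * W x / 2) * v x * fderiv ℝ v x x -
      w.g x * w.a x * ‖x‖ ^ 2 * ‖∇ v x‖ ^ 2 -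
      w.a x * fderiv ℝ (fderiv ℝ v) x x (∇ v x) := by
  have hv' := (hv.differentiable two_ne_zero x).hasFDerivAt
  have hW' := (hW.differentiable one_ne_zero x).hasFDerivAt
  have hgrad := ((contDiff_gradient hv le_rfl).differentiable one_ne_zero x).hasFDerivAt
  have total := (((w.hasRadialDeriv_quadraticCoeff x).fun_sub
    (((w.hasRadialDeriv_a x).fun_mul hW').mul_const (2⁻¹ : ℝ))).fun_mul (hv'.pow 2)).fun_sub
    (((w.hasRadialDeriv_a x).fun_mul hgrad.norm_sq).mul_const (2⁻¹ : ℝ))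
  rw [show fderiv ℝ (w.radialCoeff v W) x = _ from HasFDerivAt.fderiv total]
  simp only [Nat.add_one_sub_one, pow_one, nsmul_eq_mul, Nat.cast_ofNat, smul_add, sub_apply,
    add_apply, smul_apply, smul_eq_mul, coe_innerSL_apply, inner_self_eq_norm_sq_to_K,
    Real.ringHom_apply, ContinuousLinearMap.comp_apply, inner_fderiv_gradient hv]
  ring

lemma divergence_virialField (hv : ContDiff ℝ 2 v) (hW : ContDiff ℝ 1 W)
    (heq : Δ v x = W x * v x) :
    divergence (w.virialField v W) x =
      2 * w.g x * w.a x *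
        (fderiv ℝ v x x + (‖x‖ ^ 2 * w.g x + Module.finrank ℝ E / 2) * v x) ^ 2 +
      w.a x * v x ^ 2 * (w.gain x - virialPotential W x) := by
  have hessian_symm : fderiv ℝ (fderiv ℝ v) x x (∇ v x) = fderiv ℝ (fderiv ℝ v) x (∇ v x) x :=
    (hv.contDiffAt.isSymmSndFDerivAt (by simp)) _ _
  have hgrad := (contDiff_gradient hv le_rfl).differentiable one_ne_zero x
  have hα := (w.contDiff_gradientCoeff hv).differentiable one_ne_zero x
  have hβ := (w.contDiff_radialCoeff hv hW).differentiable one_ne_zero x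
  unfold virialField
  rw [divergence_add (hα.fun_smul hgrad) (hβ.fun_smul differentiableAt_fun_id),
    divergence_smul hα hgrad, divergence_smul hβ differentiableAt_fun_id, divergence_id,
    divergence_gradient hv, heq,
    fderiv_gradientCoeff_apply w hv, fderiv_radialCoeff_apply_self w hv hW, hessian_symm,
    fderiv_apply_gradient_self, real_inner_comm, inner_gradient_left]
  simp only [gradientCoeff, radialCoeff, linearCoeff, quadraticCoeff, gain, virialPotential]
  ring

lemma abs_gradientCoeff_le :
    |w.gradientCoeff v x| ≤ ‖∇ v x‖ * ‖x‖ + (Module.finrank ℝ E / 2 + 1 + w.D) * |v x| := by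
  refine (abs_add_le _ _).trans (add_le_add (w.abs_a_mul_le ?_) ?_)
  · exact norm_gradient (f := v) ▸ (fderiv ℝ v x).le_opNorm x
  · rw [abs_mul]
    gcongr
    exact w.abs_linearCoeff_le

lemma abs_radialCoeff_le (hW : |W x| ≤ B) :
    |w.radialCoeff v W x| ≤
      (Module.finrank ℝ E / 2 * w.D + w.D * w.D + w.D + B / 2) * |v x| ^ 2 +
        ‖∇ v x‖ ^ 2 / 2 := by
  refine (abs_sub _ _).trans (add_le_add ?_ ?_)
  · rw [abs_mul, abs_pow]
    gcongr
    refine (abs_sub _ _).trans (add_le_add w.abs_quadraticCoeff_le ?_)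
    rw [abs_div, abs_two]
    gcongr
    exact w.abs_a_mul_le hW
  · rw [mul_div_assoc]
    exact w.abs_a_mul_le (abs_of_nonneg (by positivity)).le

lemma exists_norm_virialField_le (hW : ∀ x, |W x| ≤ B) :
    ∃ C, ∀ x, ‖w.virialField v W x‖ ≤ (1 + ‖x‖) * (C * (‖∇ v x‖ ^ 2 + v x ^ 2)) := by
  obtain ⟨b, b_nonneg, gradientCoeff_le⟩ : ∃ b, 0 ≤ b ∧ ∀ x,
      |w.gradientCoeff v x| ≤ ‖∇ v x‖ * ‖x‖ + b * |v x| :=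
    ⟨_, by linarith [w.D_nonneg, (Nat.cast_nonneg _ : (0 : ℝ) ≤ Module.finrank ℝ E)],
      fun _ => w.abs_gradientCoeff_le⟩
  obtain ⟨c, c_nonneg, radialCoeff_le⟩ : ∃ c, 0 ≤ c ∧ ∀ x,
      |w.radialCoeff v W x| ≤ c * |v x| ^ 2 + ‖∇ v x‖ ^ 2 / 2 := by
    have B_nonneg : 0 ≤ B := (abs_nonneg _).trans (hW 0)
    have D_nonneg := w.D_nonneg
    exact ⟨_, by positivity, fun x => w.abs_radialCoeff_le (hW x)⟩
  refine ⟨2 + b + c, fun x => ?_⟩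
  calc ‖w.virialField v W x‖
      ≤ |w.gradientCoeff v x| * ‖∇ v x‖ + |w.radialCoeff v W x| * ‖x‖ := by
        rw [← Real.norm_eq_abs, ← Real.norm_eq_abs, ← norm_smul, ← norm_smul]
        exact norm_add_le _ _
    _ ≤ (‖∇ v x‖ * ‖x‖ + b * |v x|) * ‖∇ v x‖ + (c * |v x| ^ 2 + ‖∇ v x‖ ^ 2 / 2) * ‖x‖ := by
        gcongr
        · exact gradientCoeff_le x
        · exact radialCoeff_le x
    _ ≤ (1 + ‖x‖) * ((2 + b + c) * (‖∇ v x‖ ^ 2 + v x ^ 2)) := by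
        rw [← sq_abs (v x)]
        exact mul_add_mul_le_one_add_mul b_nonneg c_nonneg (norm_nonneg _)

variable [MeasurableSpace E] [BorelSpace E] {μ : Measure E} [μ.IsAddHaarMeasure]

lemma integral_nonpos_of_le_virial {k : E → ℝ} (hv : ContDiff ℝ 2 v)
    (hv2 : Integrable (fun x => v x ^ 2) μ) (hW : ContDiff ℝ 1 W) (hWB : ∀ x, |W x| ≤ B)
    (heq : ∀ x, Δ v x = W x * v x) (hk : Integrable k μ)
    (k_le : ∀ x, k x ≤ w.a x * v x ^ 2 * (w.gain x - virialPotential W x)) :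
    ∫ x, k x ∂μ ≤ 0 := by
  obtain ⟨C, hC⟩ := w.exists_norm_virialField_le (v := v) hWB
  refine integral_nonpos_of_le_divergence (w.contDiff_virialField hv hW)
    (((integrable_norm_gradient_sq hv hv2 hWB heq).add hv2).const_mul C) hk hC fun x => ?_
  rw [w.divergence_virialField hv hW (heq x)]
  have square_nonneg := mul_nonneg (mul_nonneg zero_le_two (w.g_nonneg x)) (w.a_nonneg x)
  exact (k_le x).trans (le_add_of_nonneg_left (mul_nonneg square_nonneg (sq_nonneg _)))

end RadialWeight

end RadialWeight

/-! ### Powers of `(M + ‖x‖ ^ 2) / (N + ‖x‖ ^ 2)` as weights -/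

section PowerWeight

variable {E : Type*} [NormedAddCommGroup E] {M N e : ℝ} {k : ℕ} {x : E}

/-- The function `x ↦ 1 / (M + ‖x‖ ^ 2)`. -/
noncomputable def invNormSq (M : ℝ) (x : E) : ℝ := (M + ‖x‖ ^ 2)⁻¹

lemma invNormSq_pos (hM : 0 < M) : 0 < invNormSq M x := by unfold invNormSq; positivity

lemma invNormSq_le_inv (hM : 0 < M) : invNormSq M x ≤ M⁻¹ :=
  inv_anti₀ hM (le_add_of_nonneg_right (sq_nonneg _))

lemma invNormSq_anti (hM : 0 < M) (hMN : M ≤ N) : invNormSq N x ≤ invNormSq M x :=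
  inv_anti₀ (by positivity) (by gcongr)

lemma add_norm_sq_mul_invNormSq (hM : 0 < M) : (M + ‖x‖ ^ 2) * invNormSq M x = 1 :=
  mul_inv_cancel₀ (by positivity)

lemma norm_sq_mul_invNormSq (hM : 0 < M) :
    ‖x‖ ^ 2 * invNormSq M x = 1 - M * invNormSq M x := by
  linarith [add_norm_sq_mul_invNormSq (x := x) hM]

lemma norm_sq_mul_invNormSq_le_one (hM : 0 < M) : ‖x‖ ^ 2 * invNormSq M x ≤ 1 := by
  have := mul_pos hM (invNormSq_pos (x := x) hM)
  linarith [norm_sq_mul_invNormSq (x := x) hM]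

lemma add_norm_sq_mul_invNormSq_nonneg (hM : 0 < M) (hMN : M ≤ N) :
    0 ≤ (M + ‖x‖ ^ 2) * invNormSq N x :=
  mul_nonneg (by positivity) (invNormSq_pos (hM.trans_le hMN)).le

lemma add_norm_sq_mul_invNormSq_le_one (hM : 0 < M) (hMN : M ≤ N) :
    (M + ‖x‖ ^ 2) * invNormSq N x ≤ 1 := by
  rw [← add_norm_sq_mul_invNormSq (x := x) (hM.trans_le hMN)]
  gcongr
  exact (invNormSq_pos (hM.trans_le hMN)).le

lemma invNormSq_sub_le_inv (hM : 0 < M) (hMN : M ≤ N) :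
    invNormSq M x - invNormSq N x ≤ M⁻¹ :=
  (sub_le_self _ (invNormSq_pos (hM.trans_le hMN)).le).trans (invNormSq_le_inv hM)

lemma norm_sq_mul_invNormSq_sub_le_one (hM : 0 < M) (hMN : M ≤ N) :
    ‖x‖ ^ 2 * (invNormSq M x - invNormSq N x) ≤ 1 :=
  (mul_le_mul_of_nonneg_left (sub_le_self _ (invNormSq_pos (hM.trans_le hMN)).le)
    (sq_nonneg _)).trans (norm_sq_mul_invNormSq_le_one hM)

lemma norm_sq_mul_abs_invNormSq_sq_sub_sq_le (hM : 0 < M) (hMN : M ≤ N) :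
    ‖x‖ ^ 2 * |invNormSq M x ^ 2 - invNormSq N x ^ 2| ≤ M⁻¹ := by
  have r_pos := invNormSq_pos (x := x) (hM.trans_le hMN)
  have r_sq_le : invNormSq N x ^ 2 ≤ invNormSq M x ^ 2 :=
    pow_le_pow_left₀ r_pos.le (invNormSq_anti hM hMN) 2
  rw [abs_of_nonneg (sub_nonneg.2 r_sq_le)]
  calc ‖x‖ ^ 2 * (invNormSq M x ^ 2 - invNormSq N x ^ 2)
      ≤ ‖x‖ ^ 2 * invNormSq M x ^ 2 := by
        gcongr
        exact sub_le_self _ (sq_nonneg _)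
    _ = ‖x‖ ^ 2 * invNormSq M x * invNormSq M x := by ring
    _ ≤ 1 * M⁻¹ := mul_le_mul (norm_sq_mul_invNormSq_le_one hM) (invNormSq_le_inv hM)
        (invNormSq_pos hM).le zero_le_one
    _ = M⁻¹ := one_mul _

variable [InnerProductSpace ℝ E]

lemma hasRadialDeriv_invNormSq (hM : 0 < M) :
    HasRadialDeriv (invNormSq M : E → ℝ) (fun x => -2 * invNormSq M x ^ 2) :=
  (HasRadialDeriv.norm_sq.const_add M).inv fun x => by positivity

lemma continuous_invNormSq (hM : 0 < M) : Continuous (invNormSq M : E → ℝ) :=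
  continuous_iff_continuousAt.2 fun x => (hasRadialDeriv_invNormSq hM x).continuousAt

lemma hasRadialDeriv_add_norm_sq_mul_invNormSq_pow (k : ℕ) (hM : 0 < M) (hN : 0 < N) :
    HasRadialDeriv (fun x : E => ((M + ‖x‖ ^ 2) * invNormSq N x) ^ k) fun x =>
      2 * (k * (invNormSq M x - invNormSq N x)) * ((M + ‖x‖ ^ 2) * invNormSq N x) ^ k := by
  refine (((HasRadialDeriv.norm_sq.const_add M).mul
    (hasRadialDeriv_invNormSq hN)).pow k).congr_deriv fun x => ?_
  cases k with
  | zero => simp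
  | succ k =>
    push_cast
    linear_combination -2 * (k + 1) * ((M + ‖x‖ ^ 2) * invNormSq N x) ^ k * invNormSq N x *
      add_norm_sq_mul_invNormSq (x := x) hM

variable (E) in
/-- The Carleman weight `((M + ‖x‖ ^ 2) / (N + ‖x‖ ^ 2)) ^ k`: it grows like a large power of
`M + ‖x‖ ^ 2` on the ball of radius `√N` and levels off to `1` beyond. -/
noncomputable def powerWeight (k : ℕ) (hM : 0 < M) (hMN : M ≤ N) : RadialWeight E where
  a x := ((M + ‖x‖ ^ 2) * invNormSq N x) ^ k
  g x := k * (invNormSq M x - invNormSq N x)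
  g₁ x := -2 * k * (invNormSq M x ^ 2 - invNormSq N x ^ 2)
  g₂ x := 8 * k * (invNormSq M x ^ 3 - invNormSq N x ^ 3)
  D := k * (1 + 2 * M⁻¹)
  hasRadialDeriv_a := hasRadialDeriv_add_norm_sq_mul_invNormSq_pow k hM (hM.trans_le hMN)
  hasRadialDeriv_g :=
    (((hasRadialDeriv_invNormSq hM).sub
      (hasRadialDeriv_invNormSq (hM.trans_le hMN))).const_mul _).congr_deriv fun x => by ring
  hasRadialDeriv_g₁ :=
    ((((hasRadialDeriv_invNormSq hM).pow 2).sub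
      ((hasRadialDeriv_invNormSq (hM.trans_le hMN)).pow 2)).const_mul _).congr_deriv fun x => by
        simp only [Nat.cast_ofNat, Nat.add_one_sub_one, pow_one]
        ring
  continuous_g₂ := continuous_const.mul
    (((continuous_invNormSq hM).pow 3).sub ((continuous_invNormSq (hM.trans_le hMN)).pow 3))
  a_nonneg x := pow_nonneg (add_norm_sq_mul_invNormSq_nonneg hM hMN) k
  a_le_one x := pow_le_one₀ (add_norm_sq_mul_invNormSq_nonneg hM hMN)
    (add_norm_sq_mul_invNormSq_le_one hM hMN)
  g_nonneg x := mul_nonneg k.cast_nonneg (sub_nonneg.2 (invNormSq_anti hM hMN))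
  g_le x := mul_le_mul_of_nonneg_left (by
    linarith [invNormSq_sub_le_inv (x := x) hM hMN, inv_pos.2 hM]) k.cast_nonneg
  norm_sq_mul_g_le x := by
    rw [mul_left_comm]
    refine mul_le_mul_of_nonneg_left ?_ k.cast_nonneg
    linarith [norm_sq_mul_invNormSq_sub_le_one (x := x) hM hMN, inv_pos.2 hM]
  norm_sq_mul_abs_g₁_le x := by
    rw [abs_mul, abs_mul, abs_neg, abs_two, Nat.abs_cast]
    linarith [k.cast_nonneg (α := ℝ), mul_le_mul_of_nonneg_left
      (norm_sq_mul_abs_invNormSq_sq_sub_sq_le (x := x) hM hMN) (k.cast_nonneg (α := ℝ))]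

lemma powerWeight_gain_eq (hM : 0 < M) (hMN : M ≤ N) :
    (powerWeight E k hM hMN).gain x =
      2 * ‖x‖ ^ 2 * (powerWeight E k hM hMN).g x ^ 2 *
        (1 - ‖x‖ ^ 2 * invNormSq M x - ‖x‖ ^ 2 * invNormSq N x) +
      (powerWeight E k hM hMN).g x *
        (2 * (‖x‖ ^ 2 * invNormSq M x + ‖x‖ ^ 2 * invNormSq N x) -
          4 * ((‖x‖ ^ 2 * invNormSq M x) ^ 2 +
            ‖x‖ ^ 2 * invNormSq M x * (‖x‖ ^ 2 * invNormSq N x) +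
            (‖x‖ ^ 2 * invNormSq N x) ^ 2)) := by
  simp only [RadialWeight.gain, powerWeight]
  ring

lemma norm_sq_mul_powerWeight_g_le (hM : 0 < M) (hMN : M ≤ N) :
    ‖x‖ ^ 2 * (powerWeight E k hM hMN).g x ≤ k := by
  simp only [powerWeight]
  rw [mul_left_comm]
  exact mul_le_of_le_one_right k.cast_nonneg (norm_sq_mul_invNormSq_sub_le_one hM hMN)

lemma le_powerWeight_gain (hM : 0 < M) (hMN : M ≤ N) :
    2 * (‖x‖ ^ 2 * invNormSq M x) *
        (M * (powerWeight E k hM hMN).g x ^ 2 - 4 * (powerWeight E k hM hMN).g x) -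
      2 * (k ^ 2 / N) ≤ (powerWeight E k hM hMN).gain x := by
  have hN := hM.trans_le hMN
  rw [powerWeight_gain_eq]
  have g_nonneg := (powerWeight E k hM hMN).g_nonneg x
  have norm_sq_mul_g_le := norm_sq_mul_powerWeight_g_le (x := x) (k := k) hM hMN
  set g := (powerWeight E k hM hMN).g x
  have s_eq := norm_sq_mul_invNormSq (x := x) hM
  have s_le_one := norm_sq_mul_invNormSq_le_one (x := x) hM
  have σ_le_s : ‖x‖ ^ 2 * invNormSq N x ≤ ‖x‖ ^ 2 * invNormSq M x :=
    mul_le_mul_of_nonneg_left (invNormSq_anti hM hMN) (sq_nonneg _)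
  have σ_nonneg : 0 ≤ ‖x‖ ^ 2 * invNormSq N x :=
    mul_nonneg (sq_nonneg _) (invNormSq_pos hN).le
  have flattening_loss : ‖x‖ ^ 2 * g ^ 2 * (‖x‖ ^ 2 * invNormSq N x) ≤ k ^ 2 / N := calc
    ‖x‖ ^ 2 * g ^ 2 * (‖x‖ ^ 2 * invNormSq N x) = (‖x‖ ^ 2 * g) ^ 2 * invNormSq N x := by ring
    _ ≤ k ^ 2 * N⁻¹ := mul_le_mul (pow_le_pow_left₀ (by positivity) norm_sq_mul_g_le 2)
      (invNormSq_le_inv hN) (invNormSq_pos hN).le (sq_nonneg _)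
  have convexity_gain : 2 * ‖x‖ ^ 2 * g ^ 2 * (1 - ‖x‖ ^ 2 * invNormSq M x) =
      2 * (‖x‖ ^ 2 * invNormSq M x) * (M * g ^ 2) := by
    linear_combination -2 * ‖x‖ ^ 2 * g ^ 2 * s_eq
  set s := ‖x‖ ^ 2 * invNormSq M x
  set σ := ‖x‖ ^ 2 * invNormSq N x
  have lower_order : -8 * s ≤ 2 * (s + σ) - 4 * (s ^ 2 + s * σ + σ ^ 2) := by
    nlinarith [mul_nonneg σ_nonneg (sub_nonneg.2 s_le_one)]
  linarith [mul_le_mul_of_nonneg_left lower_order g_nonneg]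

lemma neg_le_powerWeight_gain (hM : 0 < M) (hMN : M ≤ N) :
    -(8 / M) - 2 * (k ^ 2 / N) ≤ (powerWeight E k hM hMN).gain x := by
  refine le_trans ?_ (le_powerWeight_gain hM hMN)
  set g := (powerWeight E k hM hMN).g x
  have s_nonneg : 0 ≤ ‖x‖ ^ 2 * invNormSq M x :=
    mul_nonneg (sq_nonneg _) (invNormSq_pos hM).le
  have completed_square : M * g ^ 2 - 4 * g = M * (g - 2 / M) ^ 2 - 4 / M := by
    field_simp
    ring
  have : 0 ≤ ‖x‖ ^ 2 * invNormSq M x * (M * (g - 2 / M) ^ 2) := by positivity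
  have := mul_le_mul_of_nonneg_right (norm_sq_mul_invNormSq_le_one (x := x) hM)
    (by positivity : 0 ≤ 4 / M)
  have : 8 / M = 2 * (4 / M) := by ring
  rw [completed_square]
  linarith

lemma le_powerWeight_gain_of_norm_sq_le (hM : 0 < M) (hMN : 4 * M ≤ N) (hk : 32 ≤ k)
    (he : e ≤ ‖x‖ ^ 2) (hxM : ‖x‖ ^ 2 ≤ M) :
    e * k ^ 2 / (32 * M ^ 2) - 2 * (k ^ 2 / N) ≤
      (powerWeight E k hM (by linarith : M ≤ N)).gain x := by
  refine le_trans ?_ (le_powerWeight_gain hM _)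
  have p_ge : 1 / (2 * M) ≤ invNormSq M x := by
    rw [one_div]
    exact inv_anti₀ (by positivity) (by linarith)
  have r_le : invNormSq N x ≤ 1 / (4 * M) := by
    rw [one_div]
    exact (invNormSq_le_inv (by linarith)).trans (inv_anti₀ (by positivity) hMN)
  have hk' : (32 : ℝ) ≤ k := by exact_mod_cast hk
  have g_ge : k / (4 * M) ≤ (powerWeight E k hM (by linarith : M ≤ N)).g x := calc
    (k : ℝ) / (4 * M) = k * (1 / (2 * M) - 1 / (4 * M)) := by field_simp; ring
    _ ≤ k * (invNormSq M x - invNormSq N x) := by gcongr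
  set g := (powerWeight E k hM (by linarith : M ≤ N)).g x
  have p_pos := invNormSq_pos (x := x) hM
  have g_nonneg : 0 ≤ g := (powerWeight E k hM _).g_nonneg x
  have Mg_ge : (k : ℝ) / 8 ≤ M * g - 4 := by
    have := mul_le_mul_of_nonneg_left g_ge hM.le
    have : M * (k / (4 * M)) = k / 4 := by field_simp
    linarith
  have : e * k ^ 2 / (32 * M ^ 2) ≤ 2 * (‖x‖ ^ 2 * invNormSq M x) * (M * g ^ 2 - 4 * g) := calc
    e * k ^ 2 / (32 * M ^ 2) = 2 * (e * (1 / (2 * M))) * (k / (4 * M) * (k / 8)) := by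
      field_simp; ring
    _ ≤ 2 * (‖x‖ ^ 2 * invNormSq M x) * (g * (M * g - 4)) := by gcongr
    _ = 2 * (‖x‖ ^ 2 * invNormSq M x) * (M * g ^ 2 - 4 * g) := by ring
  linarith

lemma powerWeight_a_le (hM : 0 < M) (hMN : M ≤ N) (hx : ‖x‖ ^ 2 ≤ e) :
    (powerWeight E k hM hMN).a x ≤ ((M + e) / (N + e)) ^ k := by
  have hN := hM.trans_le hMN
  refine pow_le_pow_left₀ (add_norm_sq_mul_invNormSq_nonneg hM hMN) ?_ k
  have := sq_nonneg ‖x‖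
  rw [invNormSq, ← div_eq_mul_inv, div_le_div_iff₀ (by positivity) (by linarith)]
  nlinarith

lemma one_add_pow_mul_le_powerWeight_a (hM : 0 < M) (hMN : 4 * M ≤ N) (he : 0 ≤ e)
    (heM : 4 * e ≤ M) (hx : 4 * e ≤ ‖x‖ ^ 2) :
    (1 + e / (2 * M)) ^ k * ((M + e) / (N + e)) ^ k ≤
      (powerWeight E k hM (by linarith : M ≤ N)).a x := by
  rw [← mul_pow]
  have hN : 0 < N := by linarith
  refine pow_le_pow_left₀ (by positivity) ?_ k
  have base_mono : (M + 4 * e) / (N + 4 * e) ≤ (M + ‖x‖ ^ 2) * invNormSq N x := by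
    rw [invNormSq, ← div_eq_mul_inv, div_le_div_iff₀ (by positivity) (by positivity)]
    nlinarith
  refine le_trans ?_ base_mono
  rw [← mul_div_assoc, div_le_div_iff₀ (by positivity) (by positivity)]
  have quadratic_le : 6 * M ^ 2 + 4 * M * e + e * N + 4 * e ^ 2 ≤ 5 * M * N := by nlinarith
  have cubic_le := mul_le_mul_of_nonneg_left quadratic_le he
  have clear_denominator : (1 + e / (2 * M)) * (M + e) = (2 * M + e) * (M + e) / (2 * M) := by
    field_simp
  rw [clear_denominator, div_mul_eq_mul_div, div_le_iff₀ (by positivity)]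
  linarith

end PowerWeight

/-! ### Symbol estimates and the Laplacian in coordinates -/

section Symbol

variable {E : Type*} [NormedAddCommGroup E] {V : E → ℝ} {C C₀ C₁ δ : ℝ}

lemma one_add_norm_rpow_neg_le_one (hδ : 0 ≤ δ) (x : E) : (1 + ‖x‖) ^ (-δ) ≤ 1 :=
  Real.rpow_le_one_of_one_le_of_nonpos (le_add_of_nonneg_right (norm_nonneg x)) (neg_nonpos.2 hδ)

lemma abs_le_of_decay (hδ : 0 ≤ δ) (hV : ∀ x, |V x| ≤ C * (1 + ‖x‖) ^ (-δ)) (x : E) :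
    |V x| ≤ C := by
  have hC : 0 ≤ C := by simpa using (abs_nonneg _).trans (hV 0)
  exact (hV x).trans (mul_le_of_le_one_right hC (one_add_norm_rpow_neg_le_one hδ x))

variable [NormedSpace ℝ E]

lemma abs_fderiv_apply_self_le_of_decay {x : E}
    (hV' : ‖fderiv ℝ V x‖ ≤ C * (1 + ‖x‖) ^ (-(δ + 1))) :
    |fderiv ℝ V x x| ≤ C * (1 + ‖x‖) ^ (-δ) := by
  have one_add_pos : 0 < 1 + ‖x‖ := by positivity
  calc |fderiv ℝ V x x| ≤ ‖fderiv ℝ V x‖ * (1 + ‖x‖) :=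
        (fderiv ℝ V x).le_opNorm_of_le (le_add_of_nonneg_left zero_le_one)
    _ ≤ C * (1 + ‖x‖) ^ (-(δ + 1)) * (1 + ‖x‖) := by gcongr
    _ = C * (1 + ‖x‖) ^ (-δ) := by
        rw [mul_assoc, ← Real.rpow_add_one one_add_pos.ne']
        ring_nf

lemma tendsto_add_fderiv_apply_self_of_decay [ProperSpace E] (hδ : 0 < δ)
    (hV : ∀ x, |V x| ≤ C₀ * (1 + ‖x‖) ^ (-δ))
    (hV' : ∀ x, ‖fderiv ℝ V x‖ ≤ C₁ * (1 + ‖x‖) ^ (-(δ + 1))) :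
    Tendsto (fun x => V x + fderiv ℝ V x x / 2) (cocompact E) (𝓝 0) := by
  have decay : Tendsto (fun x : E => (C₀ + C₁ / 2) * (1 + ‖x‖) ^ (-δ)) (cocompact E) (𝓝 0) := by
    simpa using ((tendsto_rpow_neg_atTop hδ).comp
      (tendsto_atTop_add_const_left _ 1 (tendsto_norm_cocompact_atTop (E := E)))).const_mul
        (C₀ + C₁ / 2)
  refine squeeze_zero_norm (fun x => ?_) decay
  calc ‖V x + fderiv ℝ V x x / 2‖ ≤ |V x| + |fderiv ℝ V x x| / 2 := by
        simpa using norm_add_le (V x) (fderiv ℝ V x x / 2)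
    _ ≤ (C₀ + C₁ / 2) * (1 + ‖x‖) ^ (-δ) := by
        linarith [hV x, abs_fderiv_apply_self_le_of_decay (hV' x)]

lemma lap_eq_laplacian {n : ℕ} {f : EuclideanSpace ℝ (Fin n) → ℂ} (hf : ContDiff ℝ 2 f) :
    lap f = Δ f := by
  ext1 x
  have hf' := (hf.fderiv_right le_rfl).differentiable one_ne_zero x
  rw [InnerProductSpace.laplacian_eq_iteratedFDeriv_orthonormalBasis f
    (EuclideanSpace.basisFun (Fin n) ℝ)]
  refine Finset.sum_congr rfl fun i _ => ?_
  rw [fderiv_clm_apply hf' (differentiableAt_const _), iteratedFDeriv_two_apply]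
  simp

end Symbol

/-! ### Vanishing of square-integrable solutions -/

section Vanishing

lemma eq_zero_of_setIntegral_sq_eq_zero {X : Type*} [TopologicalSpace X] [MeasurableSpace X]
    {μ : Measure X} [μ.IsOpenPosMeasure] {v : X → ℝ} {s : Set X} (hs : IsOpen s)
    (hv : Continuous v) (hv2 : IntegrableOn (fun x => v x ^ 2) s μ)
    (h : ∫ x in s, v x ^ 2 ∂μ = 0) {x : X} (hx : x ∈ s) : v x = 0 := by
  have ae_eq :=
    (setIntegral_eq_zero_iff_of_nonneg_ae (ae_of_all _ fun x => sq_nonneg (v x)) hv2).1 h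
  have v_sq_eq := Measure.eqOn_open_of_ae_eq ae_eq hs (by fun_prop) continuousOn_const hx
  exact (pow_eq_zero_iff two_ne_zero).1 v_sq_eq

lemma exists_forall_le_of_eventually_cocompact_le {X : Type*} [TopologicalSpace X] {f : X → ℝ}
    {a : ℝ} (hf : Continuous f) (hfa : ∀ᶠ x in cocompact X, f x ≤ a) : ∃ b, ∀ x, f x ≤ b := by
  obtain ⟨K, hK, hKa⟩ := mem_cocompact.1 hfa
  obtain ⟨b, hb⟩ := hK.bddAbove_image hf.continuousOn
  refine ⟨max a b, fun x => ?_⟩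
  by_cases hx : x ∈ K
  · exact le_max_of_le_right (hb ⟨x, hx, rfl⟩)
  · exact le_max_of_le_left (hKa hx)

variable {E : Type*} [NormedAddCommGroup E] [InnerProductSpace ℝ E] {v W : E → ℝ}
  {B C κ M e : ℝ} {k : ℕ}

lemma exists_powerWeight_virial_bounds (hκ : 0 < κ) (hB : 0 ≤ B) (he : 0 < e)
    (heM : 4 * e ≤ M) (hκM : 64 ≤ κ * M) (hk : 32 ≤ k) (hBk : 32 * M ^ 2 * B ≤ e * k ^ 2)
    (hWB : ∀ x, virialPotential W x ≤ B - κ)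
    (hWκ : ∀ x, M ≤ ‖x‖ ^ 2 → virialPotential W x ≤ -κ) :
    ∃ (w : RadialWeight E) (A : ℝ), 0 < A ∧
      (∀ x, -(A * B) ≤ w.a x * (w.gain x - virialPotential W x)) ∧
      ∀ x, 4 * e ≤ ‖x‖ ^ 2 → A * (κ / 2 * (1 + e / (2 * M)) ^ k) ≤
        w.a x * (w.gain x - virialPotential W x) := by
  have hM : 0 < M := by linarith
  obtain ⟨N, hMN, flattening_le⟩ : ∃ N, 4 * M ≤ N ∧ 2 * (k ^ 2 / N) ≤ κ / 8 := by
    refine ⟨4 * M + 16 * k ^ 2 / κ, le_add_of_nonneg_right (by positivity), ?_⟩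
    rw [← mul_div_assoc, div_le_iff₀ (by positivity)]
    have : κ / 8 * (4 * M + 16 * k ^ 2 / κ) = κ * M / 2 + 2 * k ^ 2 := by field_simp; ring
    linarith
  have hN : 0 < N := by linarith
  set w := powerWeight E k hM (by linarith : M ≤ N)
  have neg_le_gain (x : E) : -(κ / 4) ≤ w.gain x := by
    have : 8 / M ≤ κ / 8 := by rw [div_le_iff₀ hM]; linarith
    linarith [neg_le_powerWeight_gain (x := x) (k := k) hM (by linarith : M ≤ N)]
  have virial_ge (x : E) (hx : e ≤ ‖x‖ ^ 2) :
      κ / 2 ≤ w.gain x - virialPotential W x := by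
    rcases le_total M (‖x‖ ^ 2) with hxM | hxM
    · linarith [neg_le_gain x, hWκ x hxM]
    · have : B ≤ e * k ^ 2 / (32 * M ^ 2) := by rw [le_div_iff₀ (by positivity)]; linarith
      linarith [hWB x, le_powerWeight_gain_of_norm_sq_le hM hMN hk hx hxM]
  refine ⟨w, ((M + e) / (N + e)) ^ k, by positivity, fun x => ?_, fun x hx => ?_⟩
  · rcases le_total e (‖x‖ ^ 2) with hxe | hxe
    · have := mul_nonneg (w.a_nonneg x) (half_pos hκ |>.le.trans (virial_ge x hxe))
      refine le_trans ?_ this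
      rw [neg_nonpos]; positivity
    · have virial_ge_neg : -B ≤ w.gain x - virialPotential W x := by
        linarith [hWB x, neg_le_gain x]
      have := mul_le_mul_of_nonneg_left virial_ge_neg (w.a_nonneg x)
      have := mul_le_mul_of_nonneg_right (powerWeight_a_le (k := k) hM (by linarith : M ≤ N) hxe) hB
      linarith
  · have growth := one_add_pow_mul_le_powerWeight_a (k := k) hM hMN he.le heM hx
    have := mul_le_mul growth (virial_ge x (by linarith)) (half_pos hκ).le (w.a_nonneg x)
    linarith

variable [FiniteDimensional ℝ E] [MeasurableSpace E] [BorelSpace E] {μ : Measure E}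
  [μ.IsAddHaarMeasure]

lemma RadialWeight.mul_setIntegral_sq_le (w : RadialWeight E) {m : ℝ} {s : Set E}
    (hs : MeasurableSet s) (hv : ContDiff ℝ 2 v) (hv2 : Integrable (fun x => v x ^ 2) μ)
    (hW : ContDiff ℝ 1 W) (hWB : ∀ x, |W x| ≤ B) (heq : ∀ x, Δ v x = W x * v x) (hC : 0 ≤ C)
    (le_virial : ∀ x ∈ s, m ≤ w.a x * (w.gain x - virialPotential W x))
    (neg_le_virial : ∀ x, -C ≤ w.a x * (w.gain x - virialPotential W x)) :
    m * ∫ x in s, v x ^ 2 ∂μ ≤ C * ∫ x, v x ^ 2 ∂μ := by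
  have hmv2 : Integrable (s.indicator fun x => m * v x ^ 2) μ := (hv2.const_mul m).indicator hs
  have integral_le := w.integral_nonpos_of_le_virial hv hv2 hW hWB heq
    (hmv2.sub (hv2.const_mul C)) fun x => by
      have v_sq_nonneg := sq_nonneg (v x)
      by_cases hx : x ∈ s
      · simp only [Pi.sub_apply, Set.indicator_of_mem hx]
        nlinarith [mul_le_mul_of_nonneg_right (le_virial x hx) v_sq_nonneg,
          mul_nonneg hC v_sq_nonneg]
      · simp only [Pi.sub_apply, Set.indicator_of_notMem hx]
        nlinarith [mul_le_mul_of_nonneg_right (neg_le_virial x) v_sq_nonneg]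
  rw [integral_sub' hmv2 (hv2.const_mul C), integral_indicator hs, integral_const_mul,
    integral_const_mul] at integral_le
  linarith

lemma one_add_pow_mul_setIntegral_sq_le (hv : ContDiff ℝ 2 v)
    (hv2 : Integrable (fun x => v x ^ 2) μ) (hW : ContDiff ℝ 1 W) (hWC : ∀ x, |W x| ≤ C)
    (heq : ∀ x, Δ v x = W x * v x) (hκ : 0 < κ) (hB : 0 ≤ B) (he : 0 < e)
    (heM : 4 * e ≤ M) (hκM : 64 ≤ κ * M) (hk : 32 ≤ k) (hBk : 32 * M ^ 2 * B ≤ e * k ^ 2)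
    (hWB : ∀ x, virialPotential W x ≤ B - κ)
    (hWκ : ∀ x, M ≤ ‖x‖ ^ 2 → virialPotential W x ≤ -κ) :
    κ / 2 * (1 + e / (2 * M)) ^ k * ∫ x in {x | 4 * e < ‖x‖ ^ 2}, v x ^ 2 ∂μ ≤
      B * ∫ x, v x ^ 2 ∂μ := by
  obtain ⟨w, A, hA, neg_le_virial, le_virial⟩ :=
    exists_powerWeight_virial_bounds hκ hB he heM hκM hk hBk hWB hWκ
  have weighted_le := w.mul_setIntegral_sq_le
    (s := {x | 4 * e < ‖x‖ ^ 2}) (measurableSet_lt measurable_const (by fun_prop))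
    hv hv2 hW hWC heq (mul_nonneg hA.le hB) (fun x hx => le_virial x (le_of_lt hx)) neg_le_virial
  rwa [mul_assoc, mul_assoc A B, mul_le_mul_iff_right₀ hA] at weighted_le

lemma setIntegral_sq_eq_zero (hv : ContDiff ℝ 2 v)
    (hv2 : Integrable (fun x => v x ^ 2) μ) (hW : ContDiff ℝ 1 W) (hWC : ∀ x, |W x| ≤ C)
    (heq : ∀ x, Δ v x = W x * v x) (hκ : 0 < κ) (hB : 0 ≤ B) (he : 0 < e)
    (heM : 4 * e ≤ M) (hκM : 64 ≤ κ * M)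
    (hWB : ∀ x, virialPotential W x ≤ B - κ)
    (hWκ : ∀ x, M ≤ ‖x‖ ^ 2 → virialPotential W x ≤ -κ) :
    ∫ x in {x | 4 * e < ‖x‖ ^ 2}, v x ^ 2 ∂μ = 0 := by
  have hM : 0 < M := by linarith
  by_contra integral_ne
  have integral_pos : 0 < ∫ x in {x | 4 * e < ‖x‖ ^ 2}, v x ^ 2 ∂μ :=
    (integral_nonneg fun x => sq_nonneg (v x)).lt_of_ne' integral_ne
  have growth : Tendsto (fun k : ℕ => κ / 2 * (1 + e / (2 * M)) ^ k *
      ∫ x in {x | 4 * e < ‖x‖ ^ 2}, v x ^ 2 ∂μ) atTop atTop :=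
    ((tendsto_pow_atTop_atTop_of_one_lt (lt_add_of_pos_right 1 (by positivity))).const_mul_atTop
      (half_pos hκ)).atTop_mul_const integral_pos
  have quadratic_growth : Tendsto (fun k : ℕ => e * (k : ℝ) ^ 2) atTop atTop :=
    ((tendsto_pow_atTop two_ne_zero).comp tendsto_natCast_atTop_atTop).const_mul_atTop he
  obtain ⟨k, growth_gt, hk, hBk⟩ := ((growth.eventually_gt_atTop (B * ∫ x, v x ^ 2 ∂μ)).and
    ((eventually_ge_atTop 32).and
      (quadratic_growth.eventually_ge_atTop (32 * M ^ 2 * B)))).exists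
  exact growth_gt.not_ge
    (one_add_pow_mul_setIntegral_sq_le hv hv2 hW hWC heq hκ hB he heM hκM hk hBk hWB hWκ)

lemma eq_zero_of_laplacian_eq_mul [Nontrivial E] (hv : ContDiff ℝ 2 v)
    (hv2 : Integrable (fun x => v x ^ 2) μ) (hW : ContDiff ℝ 1 W) (hWC : ∀ x, |W x| ≤ C)
    (heq : ∀ x, Δ v x = W x * v x) (hκ : 0 < κ)
    (hWκ : ∀ᶠ x in cocompact E, virialPotential W x ≤ -κ) (x : E) : v x = 0 := by
  obtain ⟨b, hb⟩ := exists_forall_le_of_eventually_cocompact_le (continuous_virialPotential hW) hWκ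
  obtain ⟨R, hR⟩ : ∃ R, ∀ x : E, R ≤ ‖x‖ → virialPotential W x ≤ -κ := by
    rw [← Metric.cobounded_eq_cocompact, hasBasis_cobounded_norm.eventually_iff] at hWκ
    simpa using hWκ
  have eq_zero_off_origin (x : E) (hx : x ≠ 0) : v x = 0 := by
    have norm_sq_pos : 0 < ‖x‖ ^ 2 := by positivity
    have integral_eq := setIntegral_sq_eq_zero (B := |b + κ|) (M := R ^ 2 + 64 / κ + ‖x‖ ^ 2)
      (e := ‖x‖ ^ 2 / 8) hv hv2 hW hWC heq hκ (abs_nonneg _) (by positivity)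
      (by linarith [sq_nonneg R, div_pos (by norm_num : (0 : ℝ) < 64) hκ])
      (by rw [mul_add, mul_add, mul_div_cancel₀ _ hκ.ne']; nlinarith [sq_nonneg R])
      (fun y => by linarith [hb y, le_abs_self (b + κ)])
      (fun y hy => hR y (by
        have : R ^ 2 ≤ ‖y‖ ^ 2 := by linarith [div_pos (by norm_num : (0 : ℝ) < 64) hκ]
        exact (le_abs_self R).trans (abs_le_of_sq_le_sq this (norm_nonneg y))))
    refine eq_zero_of_setIntegral_sq_eq_zero (isOpen_lt continuous_const (by fun_prop))
      hv.continuous hv2.integrableOn integral_eq (?_ : 4 * (‖x‖ ^ 2 / 8) < ‖x‖ ^ 2)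
    linarith
  exact congrFun (hv.continuous.ext_on (dense_compl_singleton 0) continuous_const
    eq_zero_off_origin) x

theorem stmt_9_general [Nontrivial E] {F : Type*} [NormedAddCommGroup F] [NormedSpace ℝ F]
    {V : E → ℝ} {B c lam : ℝ} {ψ : E → F} (hV : ContDiff ℝ 1 V) (hVB : ∀ x, |V x| ≤ B)
    (hc : c < lam) (hVc : ∀ᶠ x in cocompact E, V x + fderiv ℝ V x x / 2 ≤ c)
    (hψ : ContDiff ℝ 2 ψ) (hL2 : Integrable (fun x => ‖ψ x‖ ^ 2) μ)
    (heq : ∀ x, -Δ ψ x + V x • ψ x = lam • ψ x) (x : E) : ψ x = 0 := by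
  refine SeparatingDual.eq_zero_of_forall_dual_eq_zero (R := ℝ) fun L => ?_
  have hv : ContDiff ℝ 2 (L ∘ ψ) := L.contDiff.comp hψ
  have hv2 : Integrable (fun x => (L ∘ ψ) x ^ 2) μ := by
    refine (hL2.const_mul (‖L‖ ^ 2)).mono' (hv.continuous.pow 2).aestronglyMeasurable
      (ae_of_all _ fun x => ?_)
    rw [norm_pow, ← mul_pow]
    exact pow_le_pow_left₀ (norm_nonneg _) (L.le_opNorm _) 2
  have laplacian_eq (x : E) : Δ (L ∘ ψ) x = (V x - lam) * (L ∘ ψ) x := by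
    have heqL := congrArg L (heq x)
    rw [map_add, map_neg, map_smul, map_smul, smul_eq_mul, smul_eq_mul] at heqL
    rw [hψ.contDiffAt.laplacian_CLM_comp_left, Function.comp_apply, Function.comp_apply]
    linarith
  refine eq_zero_of_laplacian_eq_mul (W := fun x => V x - lam) (C := B + |lam|) (κ := lam - c)
    hv hv2 (hV.sub contDiff_const) (fun x => (abs_sub _ _).trans (by gcongr; exact hVB x))
    laplacian_eq (sub_pos.2 hc) (hVc.mono fun x hx => ?_) x
  rw [virialPotential, fderiv_sub_const]
  linarith

end Vanishing

/-- Euclidean instance of Corollary 5.4: absence of positive `L²` eigenvalues for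
`-Δ + V` with a smooth potential `V` of symbolic decay order `-δ`. -/
theorem stmt_9 (n : ℕ) (hn : 1 ≤ n) (δ : ℝ) (hδ : 0 < δ)
    (V : EuclideanSpace ℝ (Fin n) → ℝ) (hV : ContDiff ℝ (⊤ : ℕ∞) V)
    (hdecay : ∀ k : ℕ, ∃ C : ℝ, ∀ x,
      ‖iteratedFDeriv ℝ k V x‖ ≤ C * (1 + ‖x‖) ^ (-(δ + (k:ℝ))))
    (lam : ℝ) (hlam : 0 < lam)
    (ψ : EuclideanSpace ℝ (Fin n) → ℂ) (hψ : ContDiff ℝ (⊤ : ℕ∞) ψ)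
    (hL2 : Integrable (fun x => ‖ψ x‖^2))
    (heq : ∀ x, -lap ψ x + (V x : ℂ) * ψ x = (lam : ℂ) * ψ x) :
    ∀ x, ψ x = 0 := by
  have : Nonempty (Fin n) := Fin.pos_iff_nonempty.1 hn
  have hψ2 : ContDiff ℝ 2 ψ := contDiff_infty.1 hψ 2
  obtain ⟨C₀, hC₀⟩ := hdecay 0
  obtain ⟨C₁, hC₁⟩ := hdecay 1
  simp only [norm_iteratedFDeriv_zero, Real.norm_eq_abs, Nat.cast_zero, add_zero] at hC₀
  simp only [norm_iteratedFDeriv_one, Nat.cast_one] at hC₁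
  have virial_tendsto := tendsto_add_fderiv_apply_self_of_decay hδ hC₀ hC₁
  refine stmt_9_general (contDiff_infty.1 hV 1) (abs_le_of_decay hδ.le hC₀)
    (half_lt_self hlam) (virial_tendsto.eventually_le_const (half_pos hlam)) hψ2 hL2 fun x => ?_
  rw [← lap_eq_laplacian hψ2]
  simpa only [Complex.real_smul] using heq x
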